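/- arXiv:1404.0504 — 2 statements merged into one kernel-verified Lean document; each statement's English description precedes it below -/
import Mathlib

section
/- For all real numbers a, b, α, β with (a,b) ≠ (0,0), writing s = a² + b², one has E₁(a/s, b/s, α, −β) = s⁻³·E₁(a, b, α, β). In particular the zero set of E₁ is invariant under the transformation (a, b, α, β) ↦ (a/(a²+b²), b/(a²+b²), α, −β). -/
/-- The imaginary part of the equation cutting out the discriminant locus of the Fermat
cubic, in coordinates `x₁ = a cos α`, `x₂ = a sin α`, `x₃ = b cos β`, `x₄ = b sin β`. -/
noncomputable def E₁ (a b α β : ℝ) : ℝ :=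
  -2 * a ^ 3 * Real.cos (3 * β) * Real.sin (3 * α) +
    (-1 + a ^ 6 + 3 * a ^ 4 * b ^ 2 + 3 * a ^ 2 * b ^ 4 + b ^ 6) * Real.sin (3 * β)

/-!
Put `s = a² + b²`, so that `E₁ = -2 a³ cos 3β sin 3α + (s³ - 1) sin 3β`. The inversion
`(a, b) ↦ (a / s, b / s)` sends `s` to `s⁻¹`. It therefore multiplies `a³` by `s⁻³`, and `s³ - 1`
by `-s⁻³`; the extra sign is absorbed by `sin (-3β) = -sin 3β`.
-/

theorem sq_div_add_sq_div_eq_inv {K : Type*} [Semifield K] (a b : K) :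
    (a / (a ^ 2 + b ^ 2)) ^ 2 + (b / (a ^ 2 + b ^ 2)) ^ 2 = (a ^ 2 + b ^ 2)⁻¹ := by
  rw [div_pow, div_pow, ← add_div, sq (a ^ 2 + b ^ 2), div_self_mul_self']

theorem inv_pow_sub_one {K : Type*} [DivisionRing K] {s : K} (hs : s ≠ 0) (n : ℕ) :
    s⁻¹ ^ n - 1 = -((s ^ n)⁻¹ * (s ^ n - 1)) := by
  rw [mul_sub, inv_mul_cancel₀ (pow_ne_zero n hs), mul_one, neg_sub, inv_pow]

theorem E₁_eq_sq_add_sq (a b α β : ℝ) :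
    E₁ a b α β = -2 * a ^ 3 * Real.cos (3 * β) * Real.sin (3 * α) +
      ((a ^ 2 + b ^ 2) ^ 3 - 1) * Real.sin (3 * β) := by
  unfold E₁
  ring

theorem E₁_neg_right (a b α β : ℝ) :
    E₁ a b α (-β) = -2 * a ^ 3 * Real.cos (3 * β) * Real.sin (3 * α) -
      ((a ^ 2 + b ^ 2) ^ 3 - 1) * Real.sin (3 * β) := by
  rw [E₁_eq_sq_add_sq, mul_neg, Real.cos_neg, Real.sin_neg, mul_neg, ← sub_eq_add_neg]

theorem E₁_div_sq_add_sq_neg {a b : ℝ} (hs : a ^ 2 + b ^ 2 ≠ 0) (α β : ℝ) :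
    E₁ (a / (a ^ 2 + b ^ 2)) (b / (a ^ 2 + b ^ 2)) α (-β) =
      ((a ^ 2 + b ^ 2) ^ 3)⁻¹ * E₁ a b α β := by
  rw [E₁_neg_right, sq_div_add_sq_div_eq_inv, inv_pow_sub_one hs, div_pow, E₁_eq_sq_add_sq]
  ring

/-- For `(a,b) ≠ (0,0)` and `s = a² + b²` one has
`E₁(a/s, b/s, α, −β) = s⁻³·E₁(a, b, α, β)`; in particular the zero set of `E₁` is
invariant under `(a, b, α, β) ↦ (a/(a²+b²), b/(a²+b²), α, −β)`. -/
theorem E₁_inversion_neg_beta (a b α β : ℝ) (h : (a, b) ≠ (0, 0)) :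
    E₁ (a / (a ^ 2 + b ^ 2)) (b / (a ^ 2 + b ^ 2)) α (-β) =
      ((a ^ 2 + b ^ 2) ^ 3)⁻¹ * E₁ a b α β ∧
    (E₁ a b α β = 0 → E₁ (a / (a ^ 2 + b ^ 2)) (b / (a ^ 2 + b ^ 2)) α (-β) = 0) := by
  have hs : a ^ 2 + b ^ 2 ≠ 0 := by
    contrapose! h
    simpa [sq, mul_self_add_mul_self_eq_zero] using h
  have scaling := E₁_div_sq_add_sq_neg hs α β
  exact ⟨scaling, fun hE ↦ by rw [scaling, hE, mul_zero]⟩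
end

section
/- For every (q₁,q₂) ∈ ℂ², the binary cubic F_{(q₁, e^{iπ/3}·q₂)} is degenerate if and only if F_{(q₁,q₂)} is degenerate. In other words, the discriminant locus of the Fermat cubic is invariant under the rotation of order 6 given by (q₁,q₂) ↦ (q₁, e^{iπ/3}q₂), even though this rotation is not induced by a conformal symmetry of the Fermat cubic itself. -/
open Complex MvPolynomial

/-- The restriction of the Fermat cubic to the twistor fibre over `q = q₁ + q₂·j`,
as a homogeneous binary cubic in `ℂ[λ₁, λ₂]`. -/
noncomputable def fermatFibrePoly (q₁ q₂ : ℂ) : MvPolynomial (Fin 2) ℂ :=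
  (C q₁ * X 0 - C ((starRingEnd ℂ) q₂) * X 1) ^ 3
    + (C q₂ * X 0 + C ((starRingEnd ℂ) q₁) * X 1) ^ 3 + X 0 ^ 3 + X 1 ^ 3

/-- A binary form is degenerate if it is zero or has a projective root of multiplicity at
least two, i.e. it is not squarefree in `ℂ[λ₁,λ₂]`. -/
noncomputable def FermatDegenerate (q₁ q₂ : ℂ) : Prop := ¬ Squarefree (fermatFibrePoly q₁ q₂)

/-!
The fibre form over `(q₁, ω q₂)` with `ω³ = 1` becomes the one over `(q₁, q₂)` after the linear
change of variables `λ₂ ↦ ω λ₂`, while the form over `(q₁, -q₂)` is the one over `(q₁, q₂)` with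
its coefficients conjugated and `λ₁`, `λ₂` exchanged. Both operations are ring automorphisms of
`ℂ[λ₁, λ₂]`, so they preserve squarefreeness, and `e^{iπ/3}` is the negative of a cube root of
unity. The second automorphism is only semilinear: it replaces the discriminant by its complex
conjugate.
-/

lemma squarefree_map_iff_of_mulEquiv {F M N : Type*} [Monoid M] [Monoid N] [EquivLike F M N]
    [MulEquivClass F M N] (e : F) {x : M} : Squarefree (e x) ↔ Squarefree x := by
  simp only [Squarefree, (EquivLike.surjective e).forall, ← map_mul, map_dvd_iff,
    MulEquiv.isUnit_map]

section Rescale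

variable {σ R : Type*} [CommSemiring R]

/-- The automorphism of a polynomial ring that multiplies each variable by a unit, that is, the
change of coordinates by an invertible diagonal matrix. -/
noncomputable def rescaleVars (v : σ → Rˣ) : MvPolynomial σ R ≃ₐ[R] MvPolynomial σ R :=
  AlgEquiv.ofAlgHom (aeval fun i ↦ C (v i : R) * X i) (aeval fun i ↦ C (↑(v i)⁻¹ : R) * X i)
    (algHom_ext fun i ↦ by
      rw [AlgHom.comp_apply, aeval_X, map_mul, algHom_C, aeval_X, algebraMap_eq, ← mul_assoc,
        ← C_mul, Units.inv_mul, C_1, one_mul, AlgHom.id_apply])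
    (algHom_ext fun i ↦ by
      rw [AlgHom.comp_apply, aeval_X, map_mul, algHom_C, aeval_X, algebraMap_eq, ← mul_assoc,
        ← C_mul, Units.mul_inv, C_1, one_mul, AlgHom.id_apply])

@[simp]
lemma rescaleVars_C (v : σ → Rˣ) (r : R) : rescaleVars v (C r) = C r :=
  (rescaleVars v).commutes r

@[simp]
lemma rescaleVars_X (v : σ → Rˣ) (i : σ) : rescaleVars v (X i) = C (v i : R) * X i :=
  aeval_X _ i

end Rescale

section ConjSwap

variable {R : Type*} [CommSemiring R] [StarRing R]

/-- The automorphism of `R[λ₁, λ₂]` that conjugates the coefficients and exchanges the two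
variables. -/
noncomputable def conjSwap : MvPolynomial (Fin 2) R ≃+* MvPolynomial (Fin 2) R :=
  (mapEquiv (Fin 2) starRingAut).trans (renameEquiv R (Equiv.swap 0 1)).toRingEquiv

@[simp]
lemma conjSwap_C (r : R) : conjSwap (C r) = C (star r) := by
  simp [conjSwap]

@[simp]
lemma conjSwap_X (i : Fin 2) : conjSwap (X i : MvPolynomial (Fin 2) R) = X (Equiv.swap 0 1 i) := by
  simp [conjSwap]

end ConjSwap

section FermatFibre

variable {R : Type*} [CommRing R] [StarRing R]

/-- The restriction of the Fermat form `z₁ⁿ + z₂ⁿ + z₃ⁿ + z₄ⁿ` to the twistor fibre over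
`q₁ + q₂·j`, with coefficients in an arbitrary commutative star ring in place of `ℂ`. -/
noncomputable def fermatFibreForm (n : ℕ) (q₁ q₂ : R) : MvPolynomial (Fin 2) R :=
  (C q₁ * X 0 - C (star q₂) * X 1) ^ n + (C q₂ * X 0 + C (star q₁) * X 1) ^ n + X 0 ^ n + X 1 ^ n

lemma rescaleVars_fermatFibreForm {n : ℕ} {u : unitary R} (hu : u ^ n = 1) (q₁ q₂ : R) :
    rescaleVars ![1, Unitary.toUnits u] (fermatFibreForm n q₁ (u * q₂)) =
      fermatFibreForm n q₁ q₂ := by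
  have hu_pow : C (u : R) ^ n = (1 : MvPolynomial (Fin 2) R) := by
    rw [← C_pow, ← SubmonoidClass.coe_pow, hu, OneMemClass.coe_one, C_1]
  have hu_star : C (star (u : R)) * C (u : R) = (1 : MvPolynomial (Fin 2) R) := by
    rw [← C_mul, Unitary.coe_star_mul_self, C_1]
  have first_linear : C q₁ * X 0 - C (star (u * q₂)) * (C (u : R) * X 1) =
      (C q₁ * X 0 - C (star q₂) * X 1 : MvPolynomial (Fin 2) R) := by
    rw [star_mul', C_mul]
    linear_combination -(C (star q₂) * X 1) * hu_star
  have second_linear : C (u : R) * C q₂ * X 0 + C (star q₁) * (C (u : R) * X 1) =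
      (C (u : R) * (C q₂ * X 0 + C (star q₁) * X 1) : MvPolynomial (Fin 2) R) := by
    ring
  simp only [fermatFibreForm, map_add, map_sub, map_mul, map_pow, rescaleVars_C,
    rescaleVars_X, Matrix.cons_val_zero, Matrix.cons_val_one, Units.val_one, C_1, one_mul,
    Unitary.val_toUnits_apply, first_linear, second_linear, mul_pow, hu_pow]

lemma conjSwap_fermatFibreForm (n : ℕ) (q₁ q₂ : R) :
    conjSwap (fermatFibreForm n q₁ q₂) = fermatFibreForm n q₁ (-q₂) := by
  simp only [fermatFibreForm, map_add, map_sub, map_mul, map_pow, conjSwap_C, conjSwap_X,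
    Equiv.swap_apply_left, Equiv.swap_apply_right, star_star, star_neg, C_neg]
  ring

lemma squarefree_fermatFibreForm_unitary_mul_iff {n : ℕ} {u : unitary R} (hu : u ^ n = 1)
    (q₁ q₂ : R) :
    Squarefree (fermatFibreForm n q₁ (u * q₂)) ↔ Squarefree (fermatFibreForm n q₁ q₂) := by
  rw [← rescaleVars_fermatFibreForm hu q₁ q₂, squarefree_map_iff_of_mulEquiv]

lemma squarefree_fermatFibreForm_neg_iff (n : ℕ) (q₁ q₂ : R) :
    Squarefree (fermatFibreForm n q₁ (-q₂)) ↔ Squarefree (fermatFibreForm n q₁ q₂) := by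
  rw [← conjSwap_fermatFibreForm, squarefree_map_iff_of_mulEquiv]

theorem fermat_discriminant_order_six_symmetry_general {n : ℕ} {u : unitary R}
    (hu : u ^ n = 1 ∨ (-u) ^ n = 1) (q₁ q₂ : R) :
    Squarefree (fermatFibreForm n q₁ (u * q₂)) ↔ Squarefree (fermatFibreForm n q₁ q₂) := by
  rcases hu with hu | hu
  · exact squarefree_fermatFibreForm_unitary_mul_iff hu q₁ q₂
  · rw [← squarefree_fermatFibreForm_neg_iff, ← neg_mul]
    exact squarefree_fermatFibreForm_unitary_mul_iff hu q₁ q₂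

end FermatFibre

lemma fermatFibrePoly_eq_fermatFibreForm (q₁ q₂ : ℂ) :
    fermatFibrePoly q₁ q₂ = fermatFibreForm 3 q₁ q₂ :=
  rfl

lemma exp_ofReal_mul_I_mem_unitary (t : ℝ) : exp (t * I) ∈ unitary ℂ := by
  rw [Unitary.mem_iff_self_mul_star, star_def, mul_conj, normSq_eq_norm_sq, norm_exp_ofReal_mul_I]
  simp

lemma exp_pi_mul_I_div_three_mem_unitary : exp (Real.pi * I / 3) ∈ unitary ℂ := by
  simpa [mul_div_right_comm] using exp_ofReal_mul_I_mem_unitary (Real.pi / 3)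

lemma neg_exp_pi_mul_I_div_three_pow_three : (-exp (Real.pi * I / 3)) ^ 3 = 1 := by
  rw [Odd.neg_pow (by decide), ← exp_nat_mul, Nat.cast_ofNat, mul_div_cancel₀ _ three_ne_zero,
    exp_pi_mul_I, neg_neg]

/-- The discriminant locus of the Fermat cubic is invariant under the order six rotation
`(q₁,q₂) ↦ (q₁, e^{iπ/3}q₂)`. -/
theorem fermat_discriminant_order_six_symmetry (q₁ q₂ : ℂ) :
    FermatDegenerate q₁ (Complex.exp (Real.pi * Complex.I / 3) * q₂) ↔
      FermatDegenerate q₁ q₂ := by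
  simp only [FermatDegenerate, fermatFibrePoly_eq_fermatFibreForm]
  exact not_congr <| fermat_discriminant_order_six_symmetry_general
    (u := ⟨_, exp_pi_mul_I_div_three_mem_unitary⟩)
    (.inr (Subtype.ext neg_exp_pi_mul_I_div_three_pow_three)) q₁ q₂
end
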